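/- arXiv:1804.02268 — 4 statements merged into one kernel-verified Lean document; each statement's English description precedes it below -/
import Mathlib

section
/- Let (x,t) be a DSIC, deterministic (hence agent-independent) social choice mechanism on a type domain 𝒰 ⊆ ∏_i U_i in which each U_i consists of types satisfying (S1),(S2) and has unrestricted willingness to pay. Then (x,t) satisfies IR and no subsidy if and only if for every agent i and every u_{-i} ∈ 𝒰_{-i}, the agent-independent prices satisfy: (i) t_{i,a}(u_{-i}) ≥ 0 for every a ∈ A, and (ii) there exists a ∈ A with t_{i,a}(u_{-i}) = 0 (i.e. the prices are standard). -/
/-!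
Common framework: agents indexed by `I`, alternatives `A` (finite, nonempty).
A type of an agent is a family `u : A → ℝ → ℝ`, where `u a z` is the utility
when alternative `a` is selected and the agent pays `z`.
-/

noncomputable section

namespace NQLSC

/-- A type (utility family) of an agent. -/
abbrev Util (A : Type*) := A → ℝ → ℝ

variable {A I : Type*}

/-- (S1): each `u a` is continuous and strictly decreasing in the payment. -/
def S1 (u : Util A) : Prop := ∀ a, Continuous (u a) ∧ StrictAnti (u a)

/-- `min_{a'∈A} u_{a'}(0)`, the value of the worst alternative at zero payment. -/
def minVal [Fintype A] [Nonempty A] (u : Util A) : ℝ :=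
  Finset.univ.inf' Finset.univ_nonempty (fun a => u a 0)

/-- (S2): as the payment tends to `+∞`, the utility of every alternative drops
(strictly) below `min_{a'} u_{a'}(0)`; for strictly decreasing utilities this is
equivalent to the utility being below that value at some payment. -/
def S2 [Fintype A] [Nonempty A] (u : Util A) : Prop :=
  ∀ a, ∃ z : ℝ, u a z < minVal u

/-- The willingness to pay `p_a = u_a⁻¹(min_{a'} u_{a'}(0))` (under (S1),(S2) this
`sInf` is the unique payment at which `u a` attains `minVal u`). -/
def wtp [Fintype A] [Nonempty A] (u : Util A) (a : A) : ℝ :=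
  sInf {z : ℝ | u a z ≤ minVal u}

/-- A parallel type: (S1), (S2), and for all `a, b` with `v_a ≥ v_b` and all
`z ∈ [0, p_b]`, `u_a (z + (p_a − p_b)) = u_b z`. -/
def IsParallel [Fintype A] [Nonempty A] (u : Util A) : Prop :=
  S1 u ∧ S2 u ∧ ∀ a b : A, u b 0 ≤ u a 0 → ∀ z : ℝ, 0 ≤ z → z ≤ wtp u b →
    u a (z + (wtp u a - wtp u b)) = u b z

/-- Unrestricted willingness to pay: every nonnegative vector with a zero entry is
the willingness-to-pay vector of some type in the domain. -/
def UnrestrictedWTP [Fintype A] [Nonempty A] (U : Set (Util A)) : Prop :=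
  ∀ lam : A → ℝ, (∀ a, 0 ≤ lam a) → (∃ a, lam a = 0) →
    ∃ u ∈ U, ∀ a, wtp u a = lam a

/-- Dominant-strategy incentive compatibility of a (deterministic) mechanism `(x,t)`
on the domain `𝒰 = ∏ i, U i`. -/
def DSIC [DecidableEq I] (U : I → Set (Util A)) (x : (I → Util A) → A)
    (t : (I → Util A) → I → ℝ) : Prop :=
  ∀ uh : I → Util A, (∀ j, uh j ∈ U j) → ∀ i, ∀ ui ∈ U i,
    ui (x uh) (t uh i) ≤
      ui (x (Function.update uh i ui)) (t (Function.update uh i ui) i)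

/-- Individual rationality. -/
def IR [Fintype A] [Nonempty A] [DecidableEq I] (U : I → Set (Util A))
    (x : (I → Util A) → A) (t : (I → Util A) → I → ℝ) : Prop :=
  ∀ uh : I → Util A, (∀ j, uh j ∈ U j) → ∀ i, ∀ ui ∈ U i,
    minVal ui ≤ ui (x (Function.update uh i ui)) (t (Function.update uh i ui) i)

/-- No subsidy: the mechanism never makes positive transfers to an agent. -/
def NoSubsidy (U : I → Set (Util A)) (t : (I → Util A) → I → ℝ) : Prop :=
  ∀ u : I → Util A, (∀ j, u j ∈ U j) → ∀ i, 0 ≤ t u i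

/-- Ontoness of the choice rule on the given domain. -/
def OntoMech (U : I → Set (Util A)) (x : (I → Util A) → A) : Prop :=
  ∀ a, ∃ u : I → Util A, (∀ j, u j ∈ U j) ∧ x u = a

/-!
A type that loses by every positive payment pays at most `0` by IR, and at least `0` without
subsidies, so its report makes some price vanish. Conversely, if some report costs `0`, then under
DSIC truth-telling is at least as good as receiving the corresponding alternative for free, and
that is at least as good as receiving the worst alternative for free.
-/

section Types

variable [Fintype A] [Nonempty A]

theorem minVal_le (u : Util A) (a : A) : minVal u ≤ u a 0 :=
  Finset.inf'_le _ (Finset.mem_univ a)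

theorem lt_minVal_of_wtp_lt {u : Util A} {a : A} {z : ℝ} (hu : StrictAnti (u a))
    (hne : ∃ w, u a w ≤ minVal u) (hz : wtp u a < z) : u a z < minVal u := by
  obtain ⟨y, hy, hyz⟩ := exists_lt_of_csInf_lt hne hz
  exact (hu hyz).trans_le hy

/-- A type unwilling to pay: any positive payment, whatever is selected, leaves it worse off than
the worst alternative for free. Stated through utilities because `wtp u a` is also `0`, as a junk
`sInf`, when `u a` never drops to `minVal u`. -/
def Unwilling (u : Util A) : Prop :=
  ∀ a z, 0 < z → u a z < minVal u

theorem unwilling_of_wtp_nonpos {u : Util A} (hu : ∀ a, StrictAnti (u a))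
    (hne : ∀ a, ∃ z, u a z ≤ minVal u) (hwtp : ∀ a, wtp u a ≤ 0) : Unwilling u :=
  fun a _ hz => lt_minVal_of_wtp_lt (hu a) (hne a) ((hwtp a).trans_lt hz)

theorem UnrestrictedWTP.exists_unwilling {V : Set (Util A)} (hV : UnrestrictedWTP V)
    (hS : ∀ u ∈ V, S1 u ∧ S2 u) : ∃ u ∈ V, Unwilling u := by
  obtain ⟨u, hu, hwtp⟩ := hV 0 (fun _ => le_rfl) ⟨Classical.arbitrary A, rfl⟩
  obtain ⟨hS1, hS2⟩ := hS u hu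
  exact ⟨u, hu, unwilling_of_wtp_nonpos (fun a => (hS1 a).2)
    (fun a => (hS2 a).imp fun _ hz => hz.le) fun a => (hwtp a).le⟩

end Types

section Mechanisms

variable [DecidableEq I] {U : I → Set (Util A)} {x : (I → Util A) → A}
  {t : (I → Util A) → I → ℝ}

theorem update_mem {uh : I → Util A} (huh : ∀ j, uh j ∈ U j) {i : I} {ui : Util A}
    (hui : ui ∈ U i) (j : I) : Function.update uh i ui j ∈ U j :=
  (Function.forall_update_iff uh fun k v => v ∈ U k).2 ⟨hui, fun k _ => huh k⟩ j

theorem noSubsidy_iff_forall_update :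
    NoSubsidy U t ↔ ∀ uh : I → Util A, (∀ j, uh j ∈ U j) → ∀ i, ∀ ui ∈ U i,
      0 ≤ t (Function.update uh i ui) i := by
  refine ⟨fun h uh huh i ui hui => h _ (update_mem huh hui) i, fun h uh huh i => ?_⟩
  simpa only [Function.update_eq_self] using h uh huh i (uh i) (huh i)

theorem DSIC.le_update (h : DSIC U x t) {uh : I → Util A} (huh : ∀ j, uh j ∈ U j) {i : I}
    {ui w : Util A} (hui : ui ∈ U i) (hw : w ∈ U i) :
    ui (x (Function.update uh i w)) (t (Function.update uh i w) i) ≤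
      ui (x (Function.update uh i ui)) (t (Function.update uh i ui) i) := by
  simpa only [Function.update_idem] using h _ (update_mem huh hw) i ui hui

variable [Fintype A] [Nonempty A]

theorem IR.payment_nonpos (h : IR U x t) {uh : I → Util A} (huh : ∀ j, uh j ∈ U j) {i : I}
    {u : Util A} (hu : u ∈ U i) (hun : Unwilling u) : t (Function.update uh i u) i ≤ 0 :=
  le_of_not_gt fun hpos => (hun _ _ hpos).not_ge (h uh huh i u hu)

theorem DSIC.ir_of_exists_payment_eq_zero (h : DSIC U x t)
    (hzero : ∀ uh : I → Util A, (∀ j, uh j ∈ U j) → ∀ i,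
      ∃ w ∈ U i, t (Function.update uh i w) i = 0) : IR U x t := by
  intro uh huh i ui hui
  obtain ⟨w, hw, hw0⟩ := hzero uh huh i
  calc minVal ui
      ≤ ui (x (Function.update uh i w)) 0 := minVal_le ui _
    _ = ui (x (Function.update uh i w)) (t (Function.update uh i w) i) := by rw [hw0]
    _ ≤ ui (x (Function.update uh i ui)) (t (Function.update uh i ui) i) := h.le_update huh hui hw

end Mechanisms

theorem standard_prices_characterization_general
    [Fintype A] [Nonempty A] [DecidableEq I]
    (U : I → Set (Util A))
    (hU : ∀ i, ∃ u ∈ U i, Unwilling u)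
    (x : (I → Util A) → A) (t : (I → Util A) → I → ℝ)
    (hDSIC : DSIC U x t) :
    (IR U x t ∧ NoSubsidy U t) ↔
      ∀ uh : I → Util A, (∀ j, uh j ∈ U j) → ∀ i,
        (∀ ui ∈ U i, 0 ≤ t (Function.update uh i ui) i) ∧
        (∃ ui ∈ U i, t (Function.update uh i ui) i = 0) := by
  rw [noSubsidy_iff_forall_update]
  constructor
  · rintro ⟨hIR, hnonneg⟩ uh huh i
    obtain ⟨u, hu, hun⟩ := hU i
    exact ⟨hnonneg uh huh i, u, hu, (hIR.payment_nonpos huh hu hun).antisymm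
      (hnonneg uh huh i u hu)⟩
  · intro hprices
    exact ⟨hDSIC.ir_of_exists_payment_eq_zero fun uh huh i => (hprices uh huh i).2,
      fun uh huh i => (hprices uh huh i).1⟩

/-- For a DSIC deterministic mechanism on a domain of (S1),(S2) types
with unrestricted willingness to pay, IR together with no subsidy holds iff for every
agent `i` and every profile of the others, the agent-independent prices are standard:
every attainable payment of agent `i` is nonnegative, and some report yields payment 0. -/
theorem standard_prices_characterization
    [Fintype A] [Nonempty A] [DecidableEq I]
    (U : I → Set (Util A))
    (hS : ∀ i, ∀ u ∈ U i, S1 u ∧ S2 u)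
    (hunr : ∀ i, UnrestrictedWTP (U i))
    (x : (I → Util A) → A) (t : (I → Util A) → I → ℝ)
    (hDSIC : DSIC U x t) :
    (IR U x t ∧ NoSubsidy U t) ↔
      ∀ uh : I → Util A, (∀ j, uh j ∈ U j) → ∀ i,
        (∀ ui ∈ U i, 0 ≤ t (Function.update uh i ui) i) ∧
        (∃ ui ∈ U i, t (Function.update uh i ui) i = 0) :=
  standard_prices_characterization_general U (fun i => (hunr i).exists_unwilling (hS i)) x t hDSIC

end NQLSC
end
end

section
/- Let 𝒰 = ∏_i U_i be a parallel utility domain (every type of every agent is parallel). Then every social choice mechanism on 𝒰 that is DSIC, deterministic, IR and satisfies no subsidy has a choice rule x satisfying weak monotonicity (W-Mon): for all i, all u_{-i} ∈ 𝒰_{-i}, and all u_i, u_i' ∈ U_i, if x(u_i,u_{-i}) = a and x(u_i',u_{-i}) = b, then p'_{i,b} − p_{i,b} ≥ p'_{i,a} − p_{i,a}, where p and p' denote the willingness to pay of u_i and u_i' respectively. -/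
/-!
Common framework: agents indexed by `I`, alternatives `A` (finite, nonempty).
A type of an agent is a family `u : A → ℝ → ℝ`, where `u a z` is the utility
when alternative `a` is selected and the agent pays `z`.
-/

noncomputable section

namespace NQLSC

variable {A I : Type*}

/-!
On outcomes with nonnegative payments that leave at least the utility `minVal u`, a parallel type
`u` ranks pairs `(a, s)` as a quasilinear type with values `wtp u` would, namely by the surplus
`wtp u a - s`. Incentive compatibility for two reports of the same agent therefore gives two
inequalities between surpluses, and the payments cancel when these are added.
-/

section ParallelTypes

variable [Fintype A] [Nonempty A] {u : Util A} {a b : A} {s r : ℝ}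

theorem le_wtp_of_minVal_le (hanti : StrictAnti (u a)) (hlow : ∃ z, u a z ≤ minVal u)
    (hs : minVal u ≤ u a s) : s ≤ wtp u a :=
  le_csInf hlow fun _ hw => hanti.le_iff_ge.mp (hw.trans hs)

theorem IsParallel.le_wtp (hu : IsParallel u) (hs : minVal u ≤ u a s) : s ≤ wtp u a :=
  le_wtp_of_minVal_le (hu.1 a).2 ((hu.2.1 a).imp fun _ => le_of_lt) hs

theorem IsParallel.eq_of_surplus_eq (hu : IsParallel u) (hs : 0 ≤ s) (hr : 0 ≤ r)
    (hsa : s ≤ wtp u a) (hsurplus : wtp u a - s = wtp u b - r) : u a s = u b r := by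
  obtain ⟨-, -, hshift⟩ := hu
  rcases le_total (u a 0) (u b 0) with hab | hba
  · have hpay : s + (wtp u b - wtp u a) = r := by linarith
    rw [← hshift b a hab s hs hsa, hpay]
  · have hpay : r + (wtp u a - wtp u b) = s := by linarith
    rw [← hshift a b hba r hr (by linarith), hpay]

theorem IsParallel.lt_of_surplus_lt (hu : IsParallel u) (hs : 0 ≤ s) (hr : 0 ≤ r)
    (hsa : s ≤ wtp u a) (hsurplus : wtp u a - s < wtp u b - r) : u a s < u b r := by
  have hpay : r < s + (wtp u b - wtp u a) := by linarith
  calc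
    u a s = u b (s + (wtp u b - wtp u a)) :=
      hu.eq_of_surplus_eq hs (hr.trans hpay.le) hsa (by ring)
    _ < u b r := (hu.1 b).2 hpay

theorem IsParallel.surplus_le_of_le (hu : IsParallel u) (hs : 0 ≤ s) (hr : 0 ≤ r)
    (hmin : minVal u ≤ u a s) (hle : u b r ≤ u a s) : wtp u b - r ≤ wtp u a - s :=
  le_of_not_gt fun hlt => (hu.lt_of_surplus_lt hs hr (hu.le_wtp hmin) hlt).not_ge hle

end ParallelTypes

section Mechanisms

theorem forall_update_mem {α : I → Type*} [DecidableEq I] {s : ∀ j, Set (α j)} {f : ∀ j, α j}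
    (hf : ∀ j, f j ∈ s j) {i : I} {v : α i} (hv : v ∈ s i) (j : I) :
    Function.update f i v j ∈ s j :=
  (Set.update_mem_pi_iff_of_mem fun k _ => hf k).2 (fun _ => hv) j (Set.mem_univ j)

variable {U : I → Set (Util A)} {x : (I → Util A) → A} {t : (I → Util A) → I → ℝ}
  [DecidableEq I] {uh : I → Util A} {i : I} {w w' : Util A}

theorem DSIC.le_of_update (hDSIC : DSIC U x t) (huh : ∀ j, uh j ∈ U j)
    (hw : w ∈ U i) (hw' : w' ∈ U i) :
    w (x (Function.update uh i w')) (t (Function.update uh i w') i) ≤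
      w (x (Function.update uh i w)) (t (Function.update uh i w) i) := by
  simpa only [Function.update_idem] using
    hDSIC (Function.update uh i w') (forall_update_mem huh hw') i w hw

theorem DSIC.surplus_le_of_isParallel [Fintype A] [Nonempty A] (hDSIC : DSIC U x t)
    (hIR : IR U x t) (hNS : NoSubsidy U t) (huh : ∀ j, uh j ∈ U j)
    (hpar : IsParallel w) (hw : w ∈ U i) (hw' : w' ∈ U i) :
    wtp w (x (Function.update uh i w')) - t (Function.update uh i w') i ≤
      wtp w (x (Function.update uh i w)) - t (Function.update uh i w) i :=
  hpar.surplus_le_of_le (hNS _ (forall_update_mem huh hw) i) (hNS _ (forall_update_mem huh hw') i)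
    (hIR uh huh i w hw) (hDSIC.le_of_update huh hw hw')

end Mechanisms

theorem wmon_of_dsic_general
    [Fintype A] [Nonempty A] [DecidableEq I]
    (U : I → Set (Util A))
    (hpar : ∀ i, ∀ u ∈ U i, IsParallel u)
    (x : (I → Util A) → A) (t : (I → Util A) → I → ℝ)
    (hDSIC : DSIC U x t) (hIR : IR U x t) (hNS : NoSubsidy U t) :
    ∀ uh : I → Util A, (∀ j, uh j ∈ U j) → ∀ i, ∀ ui ∈ U i, ∀ ui' ∈ U i,
      wtp ui' (x (Function.update uh i ui)) - wtp ui (x (Function.update uh i ui)) ≤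
        wtp ui' (x (Function.update uh i ui')) - wtp ui (x (Function.update uh i ui')) := by
  intro uh huh i ui hui ui' hui'
  have htruth := hDSIC.surplus_le_of_isParallel hIR hNS huh (hpar i ui hui) hui hui'
  have htruth' := hDSIC.surplus_le_of_isParallel hIR hNS huh (hpar i ui' hui') hui' hui
  linarith

/-- On a parallel utility domain, every DSIC, deterministic, IR,
no-subsidy mechanism satisfies weak monotonicity (W-Mon) in willingness to pay. -/
theorem wmon_of_dsic
    [Fintype A] [Nonempty A] [Fintype I] [DecidableEq I]
    (U : I → Set (Util A))
    (hpar : ∀ i, ∀ u ∈ U i, IsParallel u)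
    (x : (I → Util A) → A) (t : (I → Util A) → I → ℝ)
    (hDSIC : DSIC U x t) (hIR : IR U x t) (hNS : NoSubsidy U t) :
    ∀ uh : I → Util A, (∀ j, uh j ∈ U j) → ∀ i, ∀ ui ∈ U i, ∀ ui' ∈ U i,
      wtp ui' (x (Function.update uh i ui)) - wtp ui (x (Function.update uh i ui)) ≤
        wtp ui' (x (Function.update uh i ui')) - wtp ui (x (Function.update uh i ui')) :=
  wmon_of_dsic_general U hpar x t hDSIC hIR hNS

end NQLSC
end
end

section
/- (W-Mon ⇒ PAD.) Let x : 𝒰 → A be a choice rule on a parallel utility domain 𝒰 = ∏_i U_i that satisfies weak monotonicity (W-Mon). Then x satisfies positive association of differences (PAD): for all u, u' ∈ 𝒰, if x(u) = a and p'_{i,a} − p_{i,a} > p'_{i,b} − p_{i,b} for all b ≠ a and all agents i, then x(u') = a. -/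
/-!
Common framework: agents indexed by `I`, alternatives `A` (finite, nonempty).
A type of an agent is a family `u : A → ℝ → ℝ`, where `u a z` is the utility
when alternative `a` is selected and the agent pays `z`.
-/

noncomputable section

namespace NQLSC

variable {A I : Type*}

/-!
Change the agents' types one at a time. At each change W-Mon says that the valuation of the new
outcome rises at least as much as that of the old one. Since the old outcome is the one whose
valuation rises strictly the most, the outcome cannot move.
-/

section WeakMonotonicity

variable {Θ : I → Type*} {G : Type*} [Sub G] [DecidableEq I]

/-- Weak monotonicity (W-Mon) of the choice rule `x` on the domain `∏ i, U i`, where `w i t a` is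
the valuation of the alternative `a` by agent `i` of type `t`. In the quasilinear setting `w` is
the utility at zero payment; for parallel domains it is the willingness to pay. -/
def WMonOn [LE G] (U : ∀ i, Set (Θ i)) (w : ∀ i, Θ i → A → G) (x : (∀ i, Θ i) → A) : Prop :=
  ∀ θ : ∀ i, Θ i, (∀ j, θ j ∈ U j) → ∀ i, ∀ t ∈ U i,
    w i t (x θ) - w i (θ i) (x θ) ≤
      w i t (x (Function.update θ i t)) - w i (θ i) (x (Function.update θ i t))

/-- Positive association of differences (PAD) of the choice rule `x` on the domain `∏ i, U i`, for
valuations `w` as in `WMonOn`. -/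
def PADOn [LT G] (U : ∀ i, Set (Θ i)) (w : ∀ i, Θ i → A → G) (x : (∀ i, Θ i) → A) : Prop :=
  ∀ θ θ' : ∀ i, Θ i, (∀ j, θ j ∈ U j) → (∀ j, θ' j ∈ U j) →
    (∀ i, ∀ b ≠ x θ, w i (θ' i) b - w i (θ i) b < w i (θ' i) (x θ) - w i (θ i) (x θ)) →
    x θ' = x θ

variable [Preorder G] {U : ∀ i, Set (Θ i)} {w : ∀ i, Θ i → A → G} {x : (∀ i, Θ i) → A}
  {θ θ' : ∀ i, Θ i}

theorem WMonOn.apply_update_eq (hx : WMonOn U w x) (hθ : ∀ j, θ j ∈ U j) {i : I} {t : Θ i}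
    (ht : t ∈ U i)
    (hlt : ∀ b ≠ x θ, w i t b - w i (θ i) b < w i t (x θ) - w i (θ i) (x θ)) :
    x (Function.update θ i t) = x θ := by
  by_contra hne
  exact (hlt _ hne).not_ge (hx θ hθ i t ht)

theorem WMonOn.apply_piecewise_eq (hx : WMonOn U w x) (hθ : ∀ j, θ j ∈ U j) (s : Finset I)
    (hθ' : ∀ i ∈ s, θ' i ∈ U i)
    (hlt : ∀ i ∈ s, ∀ b ≠ x θ,
      w i (θ' i) b - w i (θ i) b < w i (θ' i) (x θ) - w i (θ i) (x θ)) :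
    x (s.piecewise θ' θ) = x θ := by
  induction s using Finset.induction_on with
  | empty => rw [Finset.piecewise_empty]
  | insert i s hi ih =>
    rw [Finset.forall_mem_insert] at hθ' hlt
    have outcome_eq : x (s.piecewise θ' θ) = x θ := ih hθ'.2 hlt.2
    have type_eq : s.piecewise θ' θ i = θ i := s.piecewise_eq_of_notMem θ' θ hi
    have mem_domain (j : I) : s.piecewise θ' θ j ∈ U j := by
      by_cases hj : j ∈ s
      · simpa [hj] using hθ'.2 j hj
      · simpa [hj] using hθ j
    rw [Finset.piecewise_insert, ← outcome_eq]
    refine hx.apply_update_eq mem_domain hθ'.1 ?_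
    rw [outcome_eq, type_eq]
    exact hlt.1

theorem pad_of_wmon_general [Finite I] (hx : WMonOn U w x) : PADOn U w x := by
  intro θ θ' hθ hθ' hlt
  have := Fintype.ofFinite I
  simpa only [Finset.piecewise_univ] using
    hx.apply_piecewise_eq hθ Finset.univ (fun i _ ↦ hθ' i) (fun i _ ↦ hlt i)

end WeakMonotonicity

/-- W-Mon ⇒ PAD. On a parallel utility domain, every choice rule
satisfying weak monotonicity satisfies positive association of differences. -/
theorem pad_of_wmon
    [Fintype A] [Nonempty A] [Fintype I] [DecidableEq I]
    (U : I → Set (Util A))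
    (hpar : ∀ i, ∀ u ∈ U i, IsParallel u)
    (x : (I → Util A) → A)
    -- W-Mon
    (hW : ∀ uh : I → Util A, (∀ j, uh j ∈ U j) → ∀ i, ∀ ui ∈ U i, ∀ ui' ∈ U i,
      wtp ui' (x (Function.update uh i ui)) - wtp ui (x (Function.update uh i ui)) ≤
        wtp ui' (x (Function.update uh i ui')) - wtp ui (x (Function.update uh i ui'))) :
    -- PAD
    ∀ u u' : I → Util A, (∀ j, u j ∈ U j) → (∀ j, u' j ∈ U j) → ∀ a : A,
      x u = a →
      (∀ i, ∀ b : A, b ≠ a →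
        wtp (u' i) b - wtp (u i) b < wtp (u' i) a - wtp (u i) a) →
      x u' = a := by
  rintro u u' hu hu' _ rfl hlt
  exact pad_of_wmon_general (w := fun _ ↦ wtp)
    (fun v hv i t ht ↦ by simpa using hW v hv i (v i) (hv i) t ht) u u' hu hu' hlt
end NQLSC
end
end

section
/- Let 𝒰 = ∏_i U_i be a strictly parallel utility domain (every type of every agent is strictly parallel). Then every social choice mechanism on 𝒰 that is DSIC and deterministic has a choice rule satisfying weak monotonicity (W-Mon) in terms of willingness to pay: for all i, u_{-i} ∈ 𝒰_{-i}, and u_i, u_i' ∈ U_i, if x(u_i,u_{-i}) = a and x(u_i',u_{-i}) = b, then p'_{i,b} − p_{i,b} ≥ p'_{i,a} − p_{i,a}. -/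
/-!
Common framework: agents indexed by `I`, alternatives `A` (finite, nonempty).
A type of an agent is a family `u : A → ℝ → ℝ`, where `u a z` is the utility
when alternative `a` is selected and the agent pays `z`.
-/

noncomputable section

namespace NQLSC

variable {A I : Type*}

/-- A strictly parallel type: utility curves are horizontal shifts of each other
everywhere. -/
def IsStrictlyParallel [Fintype A] [Nonempty A] (u : Util A) : Prop :=
  S1 u ∧ S2 u ∧ ∀ a b : A, ∀ z : ℝ, u a (z + (wtp u a - wtp u b)) = u b z

/-!
A strictly parallel type orders the outcomes `(a, z)` by the net value `p a - z`. The two incentive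
constraints between the reports `u` and `u'` thus become quasilinear inequalities, and adding them
cancels both payments: what remains is weak monotonicity.
-/

/-- `u` is ordinally quasilinear with value vector `p`: it ranks alternative–payment pairs as the
quasilinear utility `p a - z` does. No cardinal form of `u` is imposed, so `p` plays the role of
`wtp u` without reference to `minVal u`. -/
def IsQuasilinearWith (p : A → ℝ) (u : Util A) : Prop :=
  ∀ ⦃a b : A⦄ ⦃s z : ℝ⦄, u b s ≤ u a z ↔ p b - s ≤ p a - z

theorem IsStrictlyParallel.isQuasilinearWith_wtp [Fintype A] [Nonempty A] {u : Util A}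
    (hu : IsStrictlyParallel u) : IsQuasilinearWith (wtp u) u := by
  intro a b s z
  obtain ⟨hmono, -, hshift⟩ := hu
  calc u b s ≤ u a z ↔ u a (s + (wtp u a - wtp u b)) ≤ u a z := by rw [hshift a b s]
    _ ↔ z ≤ s + (wtp u a - wtp u b) := (hmono a).2.le_iff_ge
    _ ↔ wtp u b - s ≤ wtp u a - z := by constructor <;> intro h <;> linarith

theorem IsQuasilinearWith.sub_le_sub_of_le_of_le {p p' : A → ℝ} {u u' : Util A}
    (hu : IsQuasilinearWith p u) (hu' : IsQuasilinearWith p' u') {a b : A} {s z : ℝ}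
    (h : u b s ≤ u a z) (h' : u' a z ≤ u' b s) : p' a - p a ≤ p' b - p b := by
  have hnet : p b - s ≤ p a - z := hu.1 h
  have hnet' : p' a - z ≤ p' b - s := hu'.1 h'
  linarith

section Mechanism

variable [DecidableEq I] {U : I → Set (Util A)} {x : (I → Util A) → A}
  {t : (I → Util A) → I → ℝ} {uh : I → Util A} {i : I} {u u' : Util A}

theorem DSIC.utility_update_le (hDSIC : DSIC U x t) (huh : ∀ j ≠ i, uh j ∈ U j)
    (hu : u ∈ U i) (hu' : u' ∈ U i) :
    u (x (Function.update uh i u')) (t (Function.update uh i u') i) ≤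
      u (x (Function.update uh i u)) (t (Function.update uh i u) i) := by
  have hmem : ∀ j, Function.update uh i u' j ∈ U j :=
    (Function.forall_update_iff uh fun j v => v ∈ U j).2 ⟨hu', huh⟩
  simpa only [Function.update_idem] using hDSIC _ hmem i u hu

theorem wmon_of_dsic_strictly_parallel_general {p p' : A → ℝ} (hDSIC : DSIC U x t)
    (huh : ∀ j ≠ i, uh j ∈ U j) (hu : u ∈ U i) (hu' : u' ∈ U i)
    (hp : IsQuasilinearWith p u) (hp' : IsQuasilinearWith p' u') :
    p' (x (Function.update uh i u)) - p (x (Function.update uh i u)) ≤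
      p' (x (Function.update uh i u')) - p (x (Function.update uh i u')) :=
  hp.sub_le_sub_of_le_of_le hp' (hDSIC.utility_update_le huh hu hu')
    (hDSIC.utility_update_le huh hu' hu)

end Mechanism

/-- On a strictly parallel utility domain, every DSIC deterministic
mechanism satisfies weak monotonicity in willingness to pay. -/
theorem wmon_of_dsic_strictly_parallel
    [Fintype A] [Nonempty A] [Fintype I] [DecidableEq I]
    (U : I → Set (Util A))
    (hpar : ∀ i, ∀ u ∈ U i, IsStrictlyParallel u)
    (x : (I → Util A) → A) (t : (I → Util A) → I → ℝ)
    (hDSIC : DSIC U x t) :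
    ∀ uh : I → Util A, (∀ j, uh j ∈ U j) → ∀ i, ∀ ui ∈ U i, ∀ ui' ∈ U i,
      wtp ui' (x (Function.update uh i ui)) - wtp ui (x (Function.update uh i ui)) ≤
        wtp ui' (x (Function.update uh i ui')) - wtp ui (x (Function.update uh i ui')) :=
  fun _ huh i ui hui ui' hui' =>
    wmon_of_dsic_strictly_parallel_general hDSIC (fun j _ => huh j) hui hui'
      (hpar i ui hui).isQuasilinearWith_wtp (hpar i ui' hui').isQuasilinearWith_wtp

end NQLSC
end
end
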